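/- For every N ≥ 2: (a) the number of 123-avoiding permutations π of size N with π_1 ≠ N equals (3/(N+1))·binom(2N−2, N) = C_N − C_{N−1} (these are exactly the 123-avoiding permutations won by the strategy of accepting the second left-to-right maximum); (b) this count equals the maximum over all strategies s of the number of 123-avoiding permutations of size N won by s; and (c) the ratio of this count to C_N tends to 3/4 as N → ∞. Here C_n denotes the n-th Catalan number. -/

import Mathlib

/-!
Removing the first entry `p` of a permutation of size `n + 1` leaves a permutation `σ` of size `n`,
and the original avoids 123 exactly when `σ` does and the entries of `σ` of value at least `p` are
decreasing. Counting the 123-avoiders of size `n` whose entries of value at least `m` are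
decreasing (`goodCount n m`) therefore yields the recursion
`goodCount (n + 1) m = ∑ p ≤ m, goodCount n p` for `m ≤ n`, which is that of the Catalan triangle
`choose (n + m) n - choose (n + m) (n + 1)`. On the diagonal this gives `catalan n` avoiders of
size `n`. The avoiders starting with their maximum are those with `p` maximal, where the condition
on `σ` is only avoidance, so there are `catalan N` of them in size `N + 1`; this gives the count in
(a) and, through the ratio of consecutive Catalan numbers, the limit in (c).

For (b), a strategy that accepts the first entry wins exactly the avoiders starting with their
maximum, and `2 * catalan N ≤ catalan (N + 1)`. A strategy that rejects the first entry wins no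
permutation starting with its maximum. Conversely, in a 123-avoider not starting with its maximum,
the first entry exceeding the initial one is the maximum (otherwise these two entries and the
maximum form a 123), so accepting that entry wins all of them.
-/

/-- One-line notation: `π i` is the (0-indexed) rank of the candidate at (0-indexed) position `i`.
`π` avoids the pattern 231 if no three positions carry entries in the relative order 2,3,1. -/
def Avoids231 {N : ℕ} (π : Fin N → Fin N) : Prop :=
  ¬ ∃ i j k : Fin N, i < j ∧ j < k ∧ π k < π i ∧ π i < π j

def Avoids132 {N : ℕ} (π : Fin N → Fin N) : Prop :=
  ¬ ∃ i j k : Fin N, i < j ∧ j < k ∧ π i < π k ∧ π k < π j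

def Avoids321 {N : ℕ} (π : Fin N → Fin N) : Prop :=
  ¬ ∃ i j k : Fin N, i < j ∧ j < k ∧ π k < π j ∧ π j < π i

def Avoids312 {N : ℕ} (π : Fin N → Fin N) : Prop :=
  ¬ ∃ i j k : Fin N, i < j ∧ j < k ∧ π j < π k ∧ π k < π i

def Avoids123 {N : ℕ} (π : Fin N → Fin N) : Prop :=
  ¬ ∃ i j k : Fin N, i < j ∧ j < k ∧ π i < π j ∧ π j < π k

def Avoids213 {N : ℕ} (π : Fin N → Fin N) : Prop :=
  ¬ ∃ i j k : Fin N, i < j ∧ j < k ∧ π j < π i ∧ π i < π k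

/-- The entry at position `m` is a left-to-right maximum. -/
def IsLRMax {N : ℕ} (π : Fin N → Fin N) (m : Fin N) : Prop :=
  ∀ l, l < m → π l < π m

/-- The flattening of the first `k` entries of `π`: the unique length-`k` sequence
on values `0,…,k-1` in the same relative order. -/
def flatten {N : ℕ} (π : Fin N → Fin N) {k : ℕ} (h : k ≤ N) : Fin k → Fin k :=
  fun a =>
    ⟨(Finset.univ.filter (fun b : Fin k => π (Fin.castLE h b) < π (Fin.castLE h a))).card, by
      have hlt : (Finset.univ.filter
          (fun b : Fin k => π (Fin.castLE h b) < π (Fin.castLE h a))).card <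
          (Finset.univ : Finset (Fin k)).card := by
        apply Finset.card_lt_card
        rw [Finset.ssubset_univ_iff]
        intro hEq
        have ha : a ∈ Finset.univ.filter
            (fun b : Fin k => π (Fin.castLE h b) < π (Fin.castLE h a)) := by
          rw [hEq]; exact Finset.mem_univ a
        simp at ha
      simpa using hlt⟩

/-- The `k`-th prefix flattenings of `π` and `τ` agree. -/
def PrefixEq {N M : ℕ} (π : Fin N → Fin N) (τ : Fin M → Fin M) (k : ℕ)
    (hN : k ≤ N) (hM : k ≤ M) : Prop :=
  ∀ a b : Fin k,
    (π (Fin.castLE hN a) < π (Fin.castLE hN b) ↔ τ (Fin.castLE hM a) < τ (Fin.castLE hM b))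

/-- A strategy assigns accept/reject to every prefix flattening. -/
def Strategy : Type := ∀ k : ℕ, (Fin k → Fin k) → Bool

/-- Playing strategy `s` on `π`, the player stops at (1-indexed) position `i`:
`i` is the least index whose prefix flattening `s` accepts, or `N` if there is none. -/
def StopsAt {N : ℕ} (s : Strategy) (π : Fin N → Fin N) (i : ℕ) : Prop :=
  1 ≤ i ∧ ∃ h : i ≤ N,
    (s i (flatten π h) = true ∨ i = N) ∧
    ∀ j, 1 ≤ j → j < i → ∀ hj : j ≤ N, s j (flatten π hj) = false

/-- Strategy `s` wins `π` if the entry at its stopping position is the maximum value. -/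
def Wins {N : ℕ} (s : Strategy) (π : Fin N → Fin N) : Prop :=
  ∃ i, StopsAt s π i ∧ ∃ h1 : i - 1 < N, ∃ h2 : N - 1 < N, π ⟨i - 1, h1⟩ = ⟨N - 1, h2⟩

/-- The number of 123-avoiding permutations of size `N+1` whose first entry is not the
maximum value. -/
noncomputable def cnt123 (N : ℕ) : ℕ :=
  Nat.card {π : Equiv.Perm (Fin (N + 1)) // Avoids123 ⇑π ∧ π 0 ≠ Fin.last N}

/-- The strategy of accepting the second left-to-right maximum wins `π`: some position `m`
is the second left-to-right maximum of `π` and carries the maximum value. -/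
def WinsSecondLRMax {N : ℕ} (π : Fin (N + 1) → Fin (N + 1)) : Prop :=
  ∃ m : Fin (N + 1), 0 < m ∧ IsLRMax π m ∧
    (∀ l : Fin (N + 1), 0 < l → l < m → ¬ IsLRMax π l) ∧ π m = Fin.last N

/-! ### Removing the first entry -/

/-- The permutation with first entry `p` whose remaining entries are in the relative order `σ`. -/
def consPerm {n : ℕ} (p : Fin (n + 1)) (σ : Equiv.Perm (Fin n)) : Equiv.Perm (Fin (n + 1)) :=
  ((finSuccEquiv' 0).trans σ.optionCongr).trans (finSuccEquiv' p).symm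

@[simp] lemma consPerm_zero {n : ℕ} (p : Fin (n + 1)) (σ : Equiv.Perm (Fin n)) :
    consPerm p σ 0 = p := by
  simp [consPerm]

@[simp] lemma consPerm_succ {n : ℕ} (p : Fin (n + 1)) (σ : Equiv.Perm (Fin n)) (i : Fin n) :
    consPerm p σ i.succ = p.succAbove (σ i) := by
  have h : finSuccEquiv' (0 : Fin (n + 1)) i.succ = some i := by
    rw [← Fin.succAbove_zero]
    exact finSuccEquiv'_succAbove 0 i
  simp [consPerm, h]

lemma consPerm_bijective (n : ℕ) :
    Function.Bijective
      (fun x : Fin (n + 1) × Equiv.Perm (Fin n) => consPerm x.1 x.2) := by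
  rw [Fintype.bijective_iff_injective_and_card]
  refine ⟨?_, by simp [Fintype.card_perm, Nat.factorial_succ]⟩
  rintro ⟨p, σ⟩ ⟨q, τ⟩ h
  have h0 := congrArg (fun f : Equiv.Perm (Fin (n + 1)) => f 0) h
  simp only [consPerm_zero] at h0
  subst h0
  refine Prod.ext rfl (Equiv.ext fun i => ?_)
  have hi := congrArg (fun f : Equiv.Perm (Fin (n + 1)) => f i.succ) h
  simpa using hi

open Classical in
lemma card_perm_succ {n : ℕ} (P : Equiv.Perm (Fin (n + 1)) → Prop) :
    Nat.card {π // P π} = ∑ p : Fin (n + 1), Nat.card {σ // P (consPerm p σ)} := by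
  have e : {x : Fin (n + 1) × Equiv.Perm (Fin n) // P (consPerm x.1 x.2)} ≃ {π // P π} :=
    (Equiv.ofBijective _ (consPerm_bijective n)).subtypeEquiv (fun _ => Iff.rfl)
  have e' : {x : Fin (n + 1) × Equiv.Perm (Fin n) // P (consPerm x.1 x.2)} ≃
      Σ p : Fin (n + 1), {σ : Equiv.Perm (Fin n) // P (consPerm p σ)} :=
    { toFun := fun x => ⟨x.1.1, x.1.2, x.2⟩
      invFun := fun x => ⟨(x.1, x.2.1), x.2.2⟩
      left_inv := fun _ => rfl
      right_inv := fun _ => rfl }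
  rw [← Nat.card_congr e, Nat.card_congr e', Nat.card_sigma]

/-! ### The Catalan triangle -/

/-- `σ` avoids 123 and its entries of value at least `m` appear in decreasing order. -/
def Good {n : ℕ} (m : ℕ) (σ : Equiv.Perm (Fin n)) : Prop :=
  Avoids123 ⇑σ ∧ ∀ i j : Fin n, i < j → m ≤ (σ i).val → ¬ σ i < σ j

/-- The number of permutations of size `n` satisfying `Good m`. -/
noncomputable def goodCount (n m : ℕ) : ℕ := Nat.card {σ : Equiv.Perm (Fin n) // Good m σ}

lemma Good.mono {n m m' : ℕ} (h : m ≤ m') {σ : Equiv.Perm (Fin n)} (hσ : Good m σ) :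
    Good m' σ :=
  ⟨hσ.1, fun i j hij hi => hσ.2 i j hij (h.trans hi)⟩

lemma good_self_iff {n : ℕ} {σ : Equiv.Perm (Fin n)} : Good n σ ↔ Avoids123 ⇑σ :=
  ⟨fun h => h.1, fun h => ⟨h, fun i _ _ hi => absurd (σ i).isLt (by omega)⟩⟩

lemma avoids_consPerm {n : ℕ} (p : Fin (n + 1)) (σ : Equiv.Perm (Fin n)) :
    Avoids123 ⇑(consPerm p σ) ↔ Good p.val σ := by
  constructor
  · intro h
    refine ⟨?_, ?_⟩
    · rintro ⟨i, j, k, hij, hjk, h1, h2⟩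
      exact h ⟨i.succ, j.succ, k.succ, by simpa using hij, by simpa using hjk,
        by simpa using h1, by simpa using h2⟩
    · intro i j hij hi hlt
      refine h ⟨0, i.succ, j.succ, Fin.succ_pos i, by simpa using hij, ?_, by simpa using hlt⟩
      rw [consPerm_zero, consPerm_succ, Fin.lt_succAbove_iff_le_castSucc]
      exact hi
  · rintro ⟨h1, h2⟩ ⟨i, j, k, hij, hjk, ha, hb⟩
    obtain ⟨j, rfl⟩ := Fin.exists_succ_eq_of_ne_zero (Fin.ne_zero_of_lt hij)
    obtain ⟨k, rfl⟩ := Fin.exists_succ_eq_of_ne_zero (Fin.ne_zero_of_lt hjk)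
    have hb' : σ j < σ k := by simpa using hb
    rcases Fin.eq_zero_or_eq_succ i with rfl | ⟨i, rfl⟩
    · rw [consPerm_zero, consPerm_succ, Fin.lt_succAbove_iff_le_castSucc] at ha
      exact h2 j k (by simpa using hjk) ha hb'
    · exact h1 ⟨i, j, k, by simpa using hij, by simpa using hjk, by simpa using ha, hb'⟩

lemma good_consPerm_of_lt {n m : ℕ} (p : Fin (n + 1)) (σ : Equiv.Perm (Fin n))
    (hp : p.val < m) : Good m (consPerm p σ) ↔ Good p.val σ := by
  refine ⟨fun h => (avoids_consPerm p σ).1 h.1, fun h => ⟨(avoids_consPerm p σ).2 h, ?_⟩⟩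
  intro i j hij hi hlt
  obtain ⟨j, rfl⟩ := Fin.exists_succ_eq_of_ne_zero (Fin.ne_zero_of_lt hij)
  rcases Fin.eq_zero_or_eq_succ i with rfl | ⟨i, rfl⟩
  · rw [consPerm_zero] at hi
    omega
  · have hlt' : p < consPerm p σ i.succ := by
      rw [Fin.lt_def]; omega
    rw [consPerm_succ, Fin.lt_succAbove_iff_le_castSucc] at hlt'
    exact h.2 i j (by simpa using hij) hlt' (by simpa using hlt)

/-- A first entry of value at least `m` must exceed all the others, so it is the maximum. -/
lemma good_consPerm_of_le {n m : ℕ} (p : Fin (n + 1)) (σ : Equiv.Perm (Fin n))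
    (hp : m ≤ p.val) : Good m (consPerm p σ) ↔ p.val = n ∧ Good m σ := by
  constructor
  · intro h
    refine ⟨?_, ((avoids_consPerm p σ).1 h.1).1, ?_⟩
    · by_contra hne
      have hlt : p < Fin.last n := Fin.lt_last_iff_ne_last.2 (fun h => hne (by simp [h]))
      obtain ⟨i, hi⟩ := (consPerm p σ).surjective (Fin.last n)
      have hi0 : i ≠ 0 := by
        rintro rfl
        rw [consPerm_zero] at hi
        exact hlt.ne hi
      exact h.2 0 i (Fin.pos_of_ne_zero hi0) (by simpa using hp) (by simpa [hi] using hlt)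
    · intro i j hij hi hlt
      refine h.2 i.succ j.succ (by simpa using hij) ?_ (by simpa using hlt)
      rw [consPerm_succ]
      unfold Fin.succAbove
      split
      · exact hi
      · rw [Fin.val_succ]
        omega
  · rintro ⟨hn, h⟩
    obtain rfl : p = Fin.last n := Fin.ext hn
    refine ⟨(avoids_consPerm _ σ).2 (good_self_iff.2 h.1), ?_⟩
    intro i j hij hi hlt
    obtain ⟨j, rfl⟩ := Fin.exists_succ_eq_of_ne_zero (Fin.ne_zero_of_lt hij)
    rcases Fin.eq_zero_or_eq_succ i with rfl | ⟨i, rfl⟩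
    · rw [consPerm_zero] at hlt
      exact absurd hlt (not_lt.2 (Fin.le_last _))
    · rw [consPerm_succ, Fin.succAbove_last] at hi
      exact h.2 i j (by simpa using hij) hi (by simpa using hlt)

lemma goodCount_succ (n m : ℕ) :
    goodCount (n + 1) m = ∑ p ∈ Finset.range (n + 1),
      if p < m then goodCount n p else if p = n then goodCount n m else 0 := by
  rw [goodCount, card_perm_succ, ← Fin.sum_univ_eq_sum_range
    (fun p => if p < m then goodCount n p else if p = n then goodCount n m else 0)]
  refine Finset.sum_congr rfl fun p _ => ?_
  by_cases hp : p.val < m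
  · simp only [good_consPerm_of_lt p _ hp, if_pos hp, goodCount]
  · rw [if_neg hp]
    simp only [good_consPerm_of_le p _ (not_lt.1 hp)]
    by_cases hn : p.val = n
    · simp [hn, goodCount]
    · simp [hn]

lemma goodCount_succ_of_le {n m : ℕ} (h : m ≤ n) :
    goodCount (n + 1) m = ∑ p ∈ Finset.range (m + 1), goodCount n p := by
  rw [goodCount_succ, Finset.sum_range_succ, Finset.sum_range_succ, if_neg (by omega), if_pos rfl]
  congr 1
  rw [← Finset.sum_subset (Finset.range_subset_range.2 h)]
  · exact Finset.sum_congr rfl fun p hp => if_pos (Finset.mem_range.1 hp)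
  · intro p hp hp'
    rw [Finset.mem_range] at hp hp'
    rw [if_neg hp', if_neg (by omega)]

lemma goodCount_succ_self (n : ℕ) :
    goodCount (n + 1) (n + 1) = ∑ p ∈ Finset.range (n + 1), goodCount n p := by
  rw [goodCount_succ]
  exact Finset.sum_congr rfl fun p hp => if_pos (Finset.mem_range.1 hp)

/-- The entries of the Catalan triangle, as ballot numbers. -/
def ballot (n m : ℕ) : ℤ := (n + m).choose n - (n + m).choose (n + 1)

lemma sum_ballot (n m : ℕ) :
    ∑ p ∈ Finset.range (m + 1), ballot n p = ballot (n + 1) m := by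
  induction m with
  | zero => simp [ballot]
  | succ m ih =>
    rw [Finset.sum_range_succ, ih]
    simp only [ballot]
    have e1 : n + 1 + (m + 1) = (n + m + 1) + 1 := by ring
    have e2 : n + 1 + m = n + m + 1 := by ring
    have e3 : n + (m + 1) = n + m + 1 := by ring
    rw [e1, e2, e3, Nat.choose_succ_succ (n + m + 1) n, Nat.choose_succ_succ (n + m + 1) (n + 1)]
    push_cast
    ring

lemma goodCount_eq_ballot (n : ℕ) : ∀ m ≤ n, (goodCount n m : ℤ) = ballot n m := by
  induction n with
  | zero =>
    intro m hm
    obtain rfl : m = 0 := by omega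
    have : goodCount 0 0 = 1 := by
      rw [goodCount, Nat.card_eq_one_iff_unique]
      exact ⟨inferInstance, ⟨⟨1, good_self_iff.2 (by rintro ⟨i, -⟩; exact i.elim0)⟩⟩⟩
    simp [this, ballot]
  | succ n ih =>
    intro m hm
    have key : ∀ k ≤ n, ((∑ p ∈ Finset.range (k + 1), goodCount n p : ℕ) : ℤ) =
        ballot (n + 1) k := by
      intro k hk
      rw [← sum_ballot]
      push_cast
      exact Finset.sum_congr rfl fun p hp => ih p (by rw [Finset.mem_range] at hp; omega)
    rcases Nat.lt_or_ge n m with h | h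
    · obtain rfl : m = n + 1 := by omega
      rw [goodCount_succ_self, key n le_rfl, ← sum_ballot n (n + 1),
        Finset.sum_range_succ _ (n + 1), sum_ballot]
      -- the superdiagonal ballot number vanishes by symmetry of `choose (2 * n + 1)`
      have : ballot n (n + 1) = 0 := by
        have h2 := Nat.choose_symm_half n
        have e : n + (n + 1) = 2 * n + 1 := by ring
        simp only [ballot]
        rw [e, h2]
        ring
      rw [this, add_zero]
    · rw [goodCount_succ_of_le h, key m h]

lemma goodCount_self (n : ℕ) : goodCount n n = catalan n := by
  have h := goodCount_eq_ballot n n le_rfl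
  have h1 := Nat.choose_succ_right_eq (n + n) n
  have h2 := succ_mul_catalan_eq_centralBinom n
  rw [Nat.centralBinom_eq_two_mul_choose, two_mul] at h2
  rw [Nat.add_sub_cancel] at h1
  simp only [ballot] at h
  zify at h1 h2 ⊢
  have hn : ((n : ℤ) + 1) ≠ 0 := by positivity
  apply mul_left_cancel₀ hn
  rw [h, h2]
  linear_combination -h1

lemma card_avoids (n : ℕ) :
    Nat.card {π : Equiv.Perm (Fin n) // Avoids123 ⇑π} = catalan n := by
  simp only [← goodCount_self, goodCount, good_self_iff]

lemma card_avoids_first (N : ℕ) :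
    Nat.card {π : Equiv.Perm (Fin (N + 1)) // Avoids123 ⇑π ∧ π 0 = Fin.last N} = catalan N := by
  rw [card_perm_succ, Finset.sum_eq_single (Fin.last N)]
  · simp only [consPerm_zero, and_true, avoids_consPerm, Fin.val_last]
    exact goodCount_self N
  · intro p _ hp
    simp [hp]
  · simp

/-! ### Counting -/

lemma cnt123_add_catalan (N : ℕ) : cnt123 N + catalan N = catalan (N + 1) := by
  classical
  rw [cnt123, ← card_avoids_first, ← card_avoids]
  simp only [Nat.card_eq_fintype_card, Fintype.card_subtype]
  rw [add_comm, ← Finset.card_filter_add_card_filter_not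
    (s := Finset.univ.filter fun π : Equiv.Perm (Fin (N + 1)) => Avoids123 ⇑π)
    (p := fun π => π 0 = Fin.last N), Finset.filter_filter, Finset.filter_filter]

lemma catalan_succ_mul (N : ℕ) : (N + 2) * catalan (N + 1) = 2 * (2 * N + 1) * catalan N := by
  have h1 := succ_mul_catalan_eq_centralBinom N
  have h2 := succ_mul_catalan_eq_centralBinom (N + 1)
  have h3 := Nat.succ_mul_centralBinom_succ N
  apply Nat.eq_of_mul_eq_mul_left (Nat.succ_pos N)
  rw [← h1, ← h2] at h3
  simp only [Nat.succ_eq_add_one]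
  linarith

lemma cnt123_mul (N : ℕ) :
    cnt123 N * (N + 2) = 3 * Nat.choose (2 * (N + 1) - 2) (N + 1) := by
  have h0 := cnt123_add_catalan N
  have h1 := catalan_succ_mul N
  have h2 := succ_mul_catalan_eq_centralBinom N
  have h3 := Nat.choose_succ_right_eq (2 * N) N
  have e : 2 * (N + 1) - 2 = 2 * N := by omega
  have e' : 2 * N - N = N := by omega
  rw [Nat.centralBinom_eq_two_mul_choose] at h2
  rw [e]
  rw [e'] at h3
  have h4 : Nat.choose (2 * N) (N + 1) = N * catalan N := by
    apply Nat.eq_of_mul_eq_mul_right (Nat.succ_pos N)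
    rw [Nat.succ_eq_add_one, h3, ← h2]
    ring
  rw [h4]
  nlinarith

lemma catalan_le_cnt123 {N : ℕ} (hN : 1 ≤ N) : catalan N ≤ cnt123 N := by
  have h0 := cnt123_add_catalan N
  have h1 := catalan_succ_mul N
  by_contra! h
  nlinarith

lemma tendsto_ratio :
    Filter.Tendsto (fun N : ℕ => (cnt123 N : ℝ) / (catalan (N + 1) : ℝ))
      Filter.atTop (nhds (3 / 4)) := by
  have hpos : ∀ n, (0 : ℝ) < catalan n := by
    intro n
    have h := succ_mul_catalan_eq_centralBinom n
    have h' := Nat.centralBinom_pos n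
    have : 0 < catalan n := by
      rw [← h] at h'
      exact Nat.pos_of_mul_pos_left h'
    exact_mod_cast this
  have heq : (fun N : ℕ => (cnt123 N : ℝ) / (catalan (N + 1) : ℝ)) =
      fun N : ℕ => 3 / 4 - 3 / 4 * ((1 / 2) / ((N : ℝ) + 1 / 2)) := by
    funext N
    have h0 : (cnt123 N : ℝ) + catalan N = catalan (N + 1) := by
      exact_mod_cast cnt123_add_catalan N
    have h1 : ((N : ℝ) + 2) * catalan (N + 1) = 2 * (2 * N + 1) * catalan N := by
      exact_mod_cast catalan_succ_mul N
    have hp := hpos (N + 1)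
    rw [div_eq_iff hp.ne']
    have hN : (N : ℝ) + 1 / 2 ≠ 0 := by positivity
    field_simp
    linear_combination 2 * ((4 * (N : ℝ) + 2) * h0 + h1)
  rw [heq]
  have h : Filter.Tendsto (fun N : ℕ => (1 / 2) / ((N : ℝ) + 1 / 2)) Filter.atTop (nhds 0) :=
    Filter.Tendsto.div_atTop tendsto_const_nhds
      (Filter.tendsto_atTop_add_const_right _ _ tendsto_natCast_atTop_atTop)
  simpa using tendsto_const_nhds.sub (h.const_mul (3 / 4))

/-! ### Strategies -/

/-- In a 123-avoider, an entry exceeding the first one is followed by nothing larger, so it is the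
maximum as soon as nothing larger precedes it. -/
lemma eq_last_of_avoids {N : ℕ} {π : Equiv.Perm (Fin (N + 1))} (h : Avoids123 ⇑π)
    {i : Fin (N + 1)} (hi : 0 < i) (hlt : π 0 < π i) (hle : ∀ l < i, π l ≤ π i) :
    π i = Fin.last N := by
  obtain ⟨m, hm⟩ := π.surjective (Fin.last N)
  by_contra hne
  have hmi : i < m := by
    rcases lt_trichotomy i m with h1 | h1 | h1
    · exact h1
    · exact absurd (h1 ▸ hm) hne
    · exact absurd (le_antisymm (Fin.le_last _) (hm ▸ hle m h1)) hne
  exact h ⟨0, i, m, hi, hmi, hlt, by rw [hm]; exact Fin.lt_last_iff_ne_last.2 hne⟩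

lemma winsSecondLRMax_iff {N : ℕ} {π : Equiv.Perm (Fin (N + 1))} (h : Avoids123 ⇑π) :
    WinsSecondLRMax ⇑π ↔ π 0 ≠ Fin.last N := by
  constructor
  · rintro ⟨m, hm, -, -, hmax⟩ h0
    exact hm.ne (π.injective (h0.trans hmax.symm))
  · intro h0
    obtain ⟨m, hm⟩ := π.surjective (Fin.last N)
    have hlt : ∀ l, l ≠ m → π l < π m := by
      intro l hl
      rw [hm, Fin.lt_last_iff_ne_last, ← hm]
      exact fun e => hl (π.injective e)
    refine ⟨m, Fin.pos_of_ne_zero ?_, fun l hl => hlt l hl.ne, ?_, hm⟩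
    · rintro rfl
      exact h0 hm
    · intro l hl hlm hmax
      exact h ⟨0, l, m, hl, hlm, hmax 0 hl, hlt l hlm.ne⟩

lemma flatten_lt_iff {N k : ℕ} (π : Fin N → Fin N) (h : k ≤ N) (a b : Fin k) :
    flatten π h a < flatten π h b ↔ π (Fin.castLE h a) < π (Fin.castLE h b) := by
  have mono : ∀ a b : Fin k, π (Fin.castLE h a) ≤ π (Fin.castLE h b) →
      flatten π h a ≤ flatten π h b := by
    intro a b hab
    simp only [flatten, Fin.mk_le_mk]
    apply Finset.card_le_card
    intro c hc
    simp only [Finset.mem_filter, Finset.mem_univ, true_and] at hc ⊢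
    exact hc.trans_le hab
  constructor
  · intro hlt
    by_contra hge
    exact absurd (mono b a (not_lt.1 hge)) (not_le.2 hlt)
  · intro hlt
    simp only [flatten, Fin.mk_lt_mk]
    apply Finset.card_lt_card
    rw [Finset.ssubset_iff_of_subset]
    · exact ⟨a, by simpa using hlt, by simp⟩
    · intro c hc
      simp only [Finset.mem_filter, Finset.mem_univ, true_and] at hc ⊢
      exact hc.trans hlt

open Classical in
/-- Accept the first entry that exceeds the initial one, that is, the second left-to-right
maximum. -/
noncomputable def secondStrategy : Strategy := fun k σ =>
  decide (∃ h : 1 < k, σ ⟨0, by omega⟩ < σ ⟨k - 1, by omega⟩)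

lemma secondStrategy_iff {N k : ℕ} (π : Fin (N + 1) → Fin (N + 1)) (h : k ≤ N + 1) :
    secondStrategy k (flatten π h) = true ↔
      ∃ h1 : 1 < k, π 0 < π ⟨k - 1, by omega⟩ := by
  simp only [secondStrategy, decide_eq_true_eq, flatten_lt_iff]
  rfl

lemma wins_secondStrategy_iff {N : ℕ} (hN : 1 ≤ N) {π : Equiv.Perm (Fin (N + 1))}
    (h : Avoids123 ⇑π) : Wins secondStrategy ⇑π ↔ π 0 ≠ Fin.last N := by
  constructor
  · rintro ⟨i, ⟨hi1, hi, hs, -⟩, h1, h2, hmax⟩ h0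
    have hi2 : 1 < i := by
      rcases hs with hs | hs
      · exact ((secondStrategy_iff _ hi).1 hs).1
      · omega
    have := congrArg Fin.val (π.injective (h0.trans hmax.symm))
    simp at this
    omega
  · intro h0
    have hex : ∃ i, ∃ hi : i < N + 1, π 0 < π ⟨i, hi⟩ := by
      obtain ⟨m, hm⟩ := π.surjective (Fin.last N)
      exact ⟨m, m.isLt, by simpa [hm] using Fin.lt_last_iff_ne_last.2 h0⟩
    classical
    obtain ⟨i, ⟨hi, hlt⟩, hmin⟩ : ∃ i, (∃ hi : i < N + 1, π 0 < π ⟨i, hi⟩) ∧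
        ∀ j < i, ∀ hj : j < N + 1, π ⟨j, hj⟩ ≤ π 0 := by
      refine ⟨Nat.find hex, Nat.find_spec hex, fun j hj hjN => ?_⟩
      by_contra hgt
      exact Nat.find_min hex hj ⟨hjN, not_le.1 hgt⟩
    have hi0 : 0 < i := by
      rcases Nat.eq_zero_or_pos i with h' | h'
      · simp [h'] at hlt
      · exact h'
    refine ⟨i + 1, ⟨by omega, by omega, Or.inl ?_, ?_⟩, hi, by omega, ?_⟩
    · exact (secondStrategy_iff _ _).2 ⟨by omega, hlt⟩
    · intro j hj1 hji hj
      rw [← Bool.not_eq_true, secondStrategy_iff]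
      rintro ⟨_, hgt⟩
      exact absurd hgt (not_lt.2 (hmin _ (by omega) _))
    · exact eq_last_of_avoids h (i := ⟨i, hi⟩) (by rw [Fin.lt_def]; exact hi0) hlt
        (fun l hl => (hmin l hl l.isLt).trans hlt.le)

lemma card_wins_le {N : ℕ} (hN : 1 ≤ N) (s : Strategy) :
    Nat.card {π : Equiv.Perm (Fin (N + 1)) // Avoids123 ⇑π ∧ Wins s ⇑π} ≤ cnt123 N := by
  -- all prefixes of length one flatten to the same permutation
  have hsub : ∀ f : Fin 1 → Fin 1, s 1 f = s 1 id := fun f => by rw [Subsingleton.elim f id]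
  cases hs : s 1 id with
  | true =>
    refine le_trans ?_ (catalan_le_cnt123 hN)
    rw [← card_avoids_first]
    refine Nat.card_mono (Set.toFinite
      {π : Equiv.Perm (Fin (N + 1)) | Avoids123 ⇑π ∧ π 0 = Fin.last N}) ?_
    rintro π ⟨h, i, ⟨hi1, hi, -, hmin⟩, h1, h2, hmax⟩
    obtain rfl : i = 1 := by
      by_contra hne
      have := hmin 1 le_rfl (by omega) (by omega)
      rw [hsub, hs] at this
      exact absurd this (by simp)
    exact ⟨h, hmax⟩
  | false =>
    refine Nat.card_mono (Set.toFinite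
      {π : Equiv.Perm (Fin (N + 1)) | Avoids123 ⇑π ∧ π 0 ≠ Fin.last N}) ?_
    rintro π ⟨h, i, ⟨hi1, hi, hst, -⟩, h1, h2, hmax⟩
    refine ⟨h, fun h0 => ?_⟩
    have := congrArg Fin.val (π.injective (h0.trans hmax.symm))
    obtain rfl : i = 1 := by
      simp at this
      omega
    rw [hsub, hs] at hst
    simp at hst
    omega

/-- for permutations of size `N+1 ≥ 2`: (a) the number of 123-avoiding ones
whose first entry is not the maximum equals `(3/(N+2))·choose(2N, N+1) = C_{N+1} - C_N`
(cleared-denominator and subtraction-free forms), and these are exactly the 123-avoiding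
orders won by the second-left-to-right-maximum strategy; (b) this count is the maximum over
all strategies; (c) the ratio of this count to `C_{N+1}` tends to `3/4`. -/
theorem stmt18 :
    (∀ N : ℕ, 1 ≤ N →
      cnt123 N * (N + 2) = 3 * Nat.choose (2 * (N + 1) - 2) (N + 1) ∧
      cnt123 N + catalan N = catalan (N + 1) ∧
      {π : Equiv.Perm (Fin (N + 1)) | Avoids123 ⇑π ∧ π 0 ≠ Fin.last N} =
        {π : Equiv.Perm (Fin (N + 1)) | Avoids123 ⇑π ∧ WinsSecondLRMax ⇑π} ∧
      IsGreatest {n : ℕ | ∃ s : Strategy,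
          n = Nat.card {π : Equiv.Perm (Fin (N + 1)) // Avoids123 ⇑π ∧ Wins s ⇑π}}
        (cnt123 N)) ∧
    Filter.Tendsto (fun N : ℕ => (cnt123 N : ℝ) / (catalan (N + 1) : ℝ))
      Filter.atTop (nhds (3 / 4)) := by
  refine ⟨fun N hN => ⟨cnt123_mul N, cnt123_add_catalan N, ?_, ⟨secondStrategy, ?_⟩, ?_⟩,
    tendsto_ratio⟩
  · ext π
    exact and_congr_right fun h => (winsSecondLRMax_iff h).symm
  · exact Nat.card_congr (Equiv.subtypeEquivRight fun π =>
      and_congr_right fun h => (wins_secondStrategy_iff hN h).symm)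
  · rintro n ⟨s, rfl⟩
    exact card_wins_le hN s
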